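/- There exists a constant C > 0 such that for every real δ > √e, every real ε > 0, and every positive integer k with πεk ≤ 1/4, writing K_j = K_j(πεk), the tangential Stokes slender-body PDE eigenvalue λᵗ = 4π²εk·K₁² / (2K₀K₁ + πεk·(K₀² − K₁²)) and the δ-regularized tangential eigenvalue λ^{δ,t} = 4π/(−1 + 2·log δ + 2·K₀(δπεk)) satisfy the refined bound |λᵗ − λ^{δ,t}| ≤ C·δ²·(1 + log δ)·ε²·k². -/

import Mathlib

open Real

/-- Modified Bessel function of the second kind of order `j`:
`K_j(z) = ∫₀^∞ exp (−z cosh t) * cosh (j t) dt`. -/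
noncomputable def besselK (j : ℕ) (z : ℝ) : ℝ :=
  ∫ t in Set.Ioi (0 : ℝ), Real.exp (-z * Real.cosh t) * Real.cosh ((j : ℝ) * t)

/-!
With `z = π * ε * k`, both eigenvalues have the form `4 * π / s`, where the symbol `s` is
`2 * K₀ z / (z * K₁ z) - 1 + (K₀ z / K₁ z) ^ 2` for the PDE and `-1 + 2 * log δ + 2 * K₀ (δ * z)`
for the regularized operator. Both symbols lie in `[d, d + 14 * (δ * z) ^ 2 * d ^ 2]`, where
`d = 2 * K₀ z - 1` is bounded below by `4 / 5` for `z ≤ 1 / 4`, and reciprocals of two numbers in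
that interval differ by at most `14 * (δ * z) ^ 2`.

Everything rests on `0 ≤ 1 - z * K₁ z ≤ z ^ 2 * (K₀ z + 1)`. It controls the PDE symbol directly,
and also the regularized one, because `(1 - z * K₁ z) / z` is the derivative of `K₀ z + log z`.
-/

open Set MeasureTheory Filter Topology

lemma abs_inv_sub_inv_le {d e x y : ℝ} (hd : 0 < d) (hx : x ∈ Icc d (d + e))
    (hy : y ∈ Icc d (d + e)) : |x⁻¹ - y⁻¹| ≤ e / d ^ 2 := by
  have hx0 : 0 < x := hd.trans_le hx.1
  have hy0 : 0 < y := hd.trans_le hy.1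
  have hyx : |y - x| ≤ e := abs_sub_le_iff.2 ⟨by linarith [hx.1, hy.2], by linarith [hy.1, hx.2]⟩
  calc |x⁻¹ - y⁻¹| = |y - x| / (x * y) := by
        rw [inv_sub_inv hx0.ne' hy0.ne', abs_div, abs_of_pos (mul_pos hx0 hy0)]
    _ ≤ e / (d * d) := by
        gcongr
        · exact (abs_nonneg _).trans hyx
        · exact hx.1
        · exact hy.1
    _ = e / d ^ 2 := by rw [sq]

section ExpNegIntegral

variable {f f' : ℝ → ℝ} {a : ℝ}

lemma hasDerivAt_neg_exp_neg {c x : ℝ} (hf : HasDerivAt f c x) :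
    HasDerivAt (fun x => -exp (-f x)) (c * exp (-f x)) x :=
  hf.fun_neg.exp.fun_neg.congr_deriv (by ring)

lemma tendsto_neg_exp_neg_atTop (hf : Tendsto f atTop atTop) :
    Tendsto (fun x => -exp (-f x)) atTop (𝓝 0) := by
  rw [← neg_zero]
  exact (tendsto_exp_neg_atTop_nhds_zero.comp hf).neg

lemma integrableOn_Ioi_deriv_mul_exp_neg (hderiv : ∀ x ∈ Ici a, HasDerivAt f (f' x) x)
    (hpos : ∀ x ∈ Ioi a, 0 ≤ f' x) (hf : Tendsto f atTop atTop) :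
    IntegrableOn (fun x => f' x * exp (-f x)) (Ioi a) :=
  integrableOn_Ioi_deriv_of_nonneg' (fun x hx => hasDerivAt_neg_exp_neg (hderiv x hx))
    (fun x hx => mul_nonneg (hpos x hx) (exp_pos _).le) (tendsto_neg_exp_neg_atTop hf)

lemma integral_Ioi_deriv_mul_exp_neg (hderiv : ∀ x ∈ Ici a, HasDerivAt f (f' x) x)
    (hpos : ∀ x ∈ Ioi a, 0 ≤ f' x) (hf : Tendsto f atTop atTop) :
    ∫ x in Ioi a, f' x * exp (-f x) = exp (-f a) := by
  rw [integral_Ioi_of_hasDerivAt_of_nonneg' (fun x hx => hasDerivAt_neg_exp_neg (hderiv x hx))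
    (fun x hx => mul_nonneg (hpos x hx) (exp_pos _).le) (tendsto_neg_exp_neg_atTop hf)]
  ring

end ExpNegIntegral

section HyperbolicIntegrals

lemma tendsto_sinh_atTop : Tendsto sinh atTop atTop :=
  tendsto_atTop_mono' atTop ((eventually_ge_atTop 0).mono fun _ => self_le_sinh_iff.2) tendsto_id

lemma tendsto_cosh_atTop : Tendsto cosh atTop atTop :=
  tendsto_atTop_mono (fun t => (sinh_lt_cosh t).le) tendsto_sinh_atTop

lemma cosh_mul_exp_neg_le_one {t : ℝ} (ht : 0 ≤ t) : cosh t * exp (-t) ≤ 1 :=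
  calc cosh t * exp (-t) ≤ exp t * exp (-t) := by
        gcongr
        linarith [cosh_add_sinh t, sinh_nonneg_iff.2 ht]
    _ = 1 := by rw [← exp_add, add_neg_cancel, exp_zero]

variable {z : ℝ}

lemma integrableOn_mul_cosh_mul_exp_neg_mul_sinh (hz : 0 < z) :
    IntegrableOn (fun t => z * cosh t * exp (-(z * sinh t))) (Ioi 0) :=
  integrableOn_Ioi_deriv_mul_exp_neg (fun t _ => (hasDerivAt_sinh t).const_mul z)
    (fun t _ => mul_nonneg hz.le (cosh_pos t).le) (tendsto_sinh_atTop.const_mul_atTop hz)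

lemma integral_mul_cosh_mul_exp_neg_mul_sinh (hz : 0 < z) :
    ∫ t in Ioi (0 : ℝ), z * cosh t * exp (-(z * sinh t)) = 1 := by
  rw [integral_Ioi_deriv_mul_exp_neg (fun t _ => (hasDerivAt_sinh t).const_mul z)
    (fun t _ => mul_nonneg hz.le (cosh_pos t).le) (tendsto_sinh_atTop.const_mul_atTop hz)]
  simp

lemma integrableOn_mul_sinh_mul_exp_neg_mul_cosh (hz : 0 < z) :
    IntegrableOn (fun t => z * sinh t * exp (-(z * cosh t))) (Ioi 0) :=
  integrableOn_Ioi_deriv_mul_exp_neg (fun t _ => (hasDerivAt_cosh t).const_mul z)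
    (fun _ ht => mul_nonneg hz.le (sinh_pos_iff.2 ht).le) (tendsto_cosh_atTop.const_mul_atTop hz)

lemma integral_mul_sinh_mul_exp_neg_mul_cosh (hz : 0 < z) :
    ∫ t in Ioi (0 : ℝ), z * sinh t * exp (-(z * cosh t)) = exp (-z) := by
  rw [integral_Ioi_deriv_mul_exp_neg (fun t _ => (hasDerivAt_cosh t).const_mul z)
    (fun _ ht => mul_nonneg hz.le (sinh_pos_iff.2 ht).le)
    (tendsto_cosh_atTop.const_mul_atTop hz)]
  simp

lemma exp_neg_mul_sinh_le (z t : ℝ) :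
    exp (-(z * sinh t)) ≤
      exp (-(z * cosh t)) + z * exp (-t) * exp (-(z * sinh t)) := by
  have hsplit : exp (-(z * cosh t)) = exp (-(z * exp (-t))) * exp (-(z * sinh t)) := by
    rw [← exp_add, ← cosh_sub_sinh t]
    ring_nf
  have := mul_le_mul_of_nonneg_right (one_sub_le_exp_neg (z * exp (-t)))
    (exp_pos (-(z * sinh t))).le
  linarith

lemma mul_cosh_mul_exp_sub_exp_le (hz : 0 ≤ z) {t : ℝ} (ht : 0 ≤ t) :
    z * cosh t * exp (-(z * sinh t)) - z * cosh t * exp (-(z * cosh t)) ≤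
      z ^ 2 * (exp (-(z * cosh t)) + z * cosh t * exp (-(z * sinh t))) := by
  have := cosh_pos t
  have hexp : exp (-t) ≤ cosh t := (exp_le_one_iff.2 (by linarith)).trans (one_le_cosh t)
  calc z * cosh t * exp (-(z * sinh t)) - z * cosh t * exp (-(z * cosh t))
      = z * cosh t * (exp (-(z * sinh t)) - exp (-(z * cosh t))) := by ring
    _ ≤ z * cosh t * (z * exp (-t) * exp (-(z * sinh t))) := by
        gcongr
        linarith [exp_neg_mul_sinh_le z t]
    _ = z ^ 2 * exp (-(z * sinh t)) * (cosh t * exp (-t)) := by ring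
    _ ≤ z ^ 2 * exp (-(z * sinh t)) :=
        mul_le_of_le_one_right (by positivity) (cosh_mul_exp_neg_le_one ht)
    _ ≤ z ^ 2 * (exp (-(z * cosh t)) + z * exp (-t) * exp (-(z * sinh t))) := by
        gcongr
        exact exp_neg_mul_sinh_le z t
    _ ≤ z ^ 2 * (exp (-(z * cosh t)) + z * cosh t * exp (-(z * sinh t))) := by gcongr

end HyperbolicIntegrals

section BesselK

variable {z : ℝ}

lemma exp_neg_mul_cosh_mul_cosh_le (hz : 0 < z) (j : ℕ) {t : ℝ} (ht : 0 ≤ t) :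
    exp (-z * cosh t) * cosh (j * t) ≤ exp ((j + 1) ^ 2 / z) * exp (-1 * t) := by
  have hjt : cosh (j * t) ≤ exp (j * t) := by
    linarith [cosh_add_sinh (j * t), sinh_nonneg_iff.2 (show 0 ≤ j * t by positivity)]
  have hcosh : t ^ 2 / 4 ≤ cosh t := by
    linarith [quadratic_le_exp_of_nonneg ht, cosh_eq t, exp_pos (-t)]
  have hquad : (j + 1) * t - z * (t ^ 2 / 4) ≤ (j + 1) ^ 2 / z := by
    rw [le_div_iff₀ hz]
    nlinarith [sq_nonneg (z * t / 2 - (j + 1))]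
  calc exp (-z * cosh t) * cosh (j * t)
      ≤ exp (-z * (t ^ 2 / 4)) * exp (j * t) := by
        rw [neg_mul, neg_mul]
        gcongr
    _ ≤ exp ((j + 1) ^ 2 / z) * exp (-1 * t) := by
        rw [← exp_add, ← exp_add]
        exact exp_le_exp.2 (by linarith)

lemma integrableOn_exp_neg_mul_cosh_mul_cosh (hz : 0 < z) (j : ℕ) :
    IntegrableOn (fun t => exp (-z * cosh t) * cosh (j * t)) (Ioi 0) := by
  refine ((integrableOn_exp_mul_Ioi neg_one_lt_zero 0).const_mul (exp ((j + 1) ^ 2 / z))).mono'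
    (by fun_prop) (ae_restrict_of_forall_mem measurableSet_Ioi fun t ht => ?_)
  rw [norm_of_nonneg (mul_pos (exp_pos _) (cosh_pos _)).le]
  exact exp_neg_mul_cosh_mul_cosh_le hz j (le_of_lt ht)

lemma besselK_nonneg (j : ℕ) (z : ℝ) : 0 ≤ besselK j z :=
  integral_nonneg fun _ => (mul_pos (exp_pos _) (cosh_pos _)).le

lemma antitoneOn_besselK (j : ℕ) : AntitoneOn (besselK j) (Ioi 0) := by
  intro x hx y hy hxy
  refine setIntegral_mono (integrableOn_exp_neg_mul_cosh_mul_cosh hy j)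
    (integrableOn_exp_neg_mul_cosh_mul_cosh hx j) fun t => ?_
  have := cosh_pos t
  have := cosh_pos (j * t)
  dsimp only
  gcongr

lemma integrableOn_exp_neg_mul_cosh (hz : 0 < z) :
    IntegrableOn (fun t => exp (-(z * cosh t))) (Ioi 0) := by
  simpa using integrableOn_exp_neg_mul_cosh_mul_cosh hz 0

lemma integrableOn_mul_cosh_mul_exp_neg_mul_cosh (hz : 0 < z) :
    IntegrableOn (fun t => z * cosh t * exp (-(z * cosh t))) (Ioi 0) := by
  refine IntegrableOn.congr_fun ((integrableOn_exp_neg_mul_cosh_mul_cosh hz 1).const_mul z)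
    (fun t _ => ?_) measurableSet_Ioi
  simp only [Nat.cast_one, one_mul, neg_mul]
  ring

lemma besselK_zero_eq_integral (z : ℝ) :
    besselK 0 z = ∫ t in Ioi (0 : ℝ), exp (-(z * cosh t)) := by
  simp [besselK]

lemma mul_besselK_one_eq_integral (z : ℝ) :
    z * besselK 1 z = ∫ t in Ioi (0 : ℝ), z * cosh t * exp (-(z * cosh t)) := by
  rw [besselK, ← integral_const_mul]
  congr 1 with t
  simp only [Nat.cast_one, one_mul, neg_mul]
  ring

lemma mul_besselK_one_le_one (hz : 0 < z) : z * besselK 1 z ≤ 1 := by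
  rw [mul_besselK_one_eq_integral, ← integral_mul_cosh_mul_exp_neg_mul_sinh hz]
  refine setIntegral_mono (integrableOn_mul_cosh_mul_exp_neg_mul_cosh hz)
    (integrableOn_mul_cosh_mul_exp_neg_mul_sinh hz) fun t => ?_
  have := cosh_pos t
  have := (sinh_lt_cosh t).le
  dsimp only
  gcongr

lemma exp_neg_le_mul_besselK_one (hz : 0 < z) : exp (-z) ≤ z * besselK 1 z := by
  rw [mul_besselK_one_eq_integral, ← integral_mul_sinh_mul_exp_neg_mul_cosh hz]
  refine setIntegral_mono (integrableOn_mul_sinh_mul_exp_neg_mul_cosh hz)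
    (integrableOn_mul_cosh_mul_exp_neg_mul_cosh hz) fun t => ?_
  have := (sinh_lt_cosh t).le
  dsimp only
  gcongr

lemma besselK_one_pos (hz : 0 < z) : 0 < besselK 1 z :=
  pos_of_mul_pos_right ((exp_pos _).trans_le (exp_neg_le_mul_besselK_one hz)) hz.le

lemma one_sub_mul_besselK_one_le (hz : 0 < z) :
    1 - z * besselK 1 z ≤ z ^ 2 * (besselK 0 z + 1) := by
  have hsinh := integrableOn_mul_cosh_mul_exp_neg_mul_sinh hz
  have hcosh := integrableOn_mul_cosh_mul_exp_neg_mul_cosh hz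
  have hexp := integrableOn_exp_neg_mul_cosh hz
  rw [mul_besselK_one_eq_integral, besselK_zero_eq_integral,
    ← integral_mul_cosh_mul_exp_neg_mul_sinh hz, ← integral_sub hsinh hcosh,
    ← integral_add hexp hsinh, ← integral_const_mul]
  exact setIntegral_mono_on (hsinh.sub hcosh) ((hexp.add hsinh).const_mul _) measurableSet_Ioi
    fun t ht => mul_cosh_mul_exp_sub_exp_le hz.le (le_of_lt ht)

lemma sub_mul_sinh_le_besselK_zero (hz : 0 < z) {T : ℝ} (hT : 0 ≤ T) :
    T - z * sinh T ≤ besselK 0 z := by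
  have hint := integrableOn_exp_neg_mul_cosh hz
  calc T - z * sinh T = ∫ t in (0 : ℝ)..T, (1 - z * cosh t) := by
        rw [intervalIntegral.integral_eq_sub_of_hasDerivAt (f := fun t => t - z * sinh t)
          (fun t _ => (hasDerivAt_id t).sub ((hasDerivAt_sinh t).const_mul z))
          (Continuous.intervalIntegrable (by fun_prop) _ _)]
        simp
    _ = ∫ t in Ioc 0 T, (1 - z * cosh t) := intervalIntegral.integral_of_le hT
    _ ≤ ∫ t in Ioc 0 T, exp (-(z * cosh t)) :=
        setIntegral_mono (Continuous.integrableOn_Ioc (by fun_prop))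
          (hint.mono_set Ioc_subset_Ioi_self) fun t => one_sub_le_exp_neg _
    _ ≤ ∫ t in Ioi (0 : ℝ), exp (-(z * cosh t)) :=
        setIntegral_mono_set hint (Eventually.of_forall fun _ => (exp_pos _).le)
          Ioc_subset_Ioi_self.eventuallyLE
    _ = besselK 0 z := (besselK_zero_eq_integral z).symm

lemma nine_tenths_le_besselK_zero (hz : 0 < z) (hz4 : z ≤ 1 / 4) : 9 / 10 ≤ besselK 0 z := by
  have hlog : log 4 = 2 * log 2 := by
    rw [show (4 : ℝ) = 2 ^ 2 by norm_num, log_pow, Nat.cast_ofNat]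
  have hquarter : log 4 - 1 / 4 * sinh (log 4) ≤ besselK 0 (1 / 4) :=
    sub_mul_sinh_le_besselK_zero (by norm_num) (log_nonneg (by norm_num))
  rw [sinh_log (by norm_num), hlog] at hquarter
  have hanti : besselK 0 (1 / 4) ≤ besselK 0 z :=
    antitoneOn_besselK 0 hz (show (0 : ℝ) < 1 / 4 by norm_num) hz4
  linarith [log_two_gt_d9]

lemma hasDerivAt_besselK_zero (hz : 0 < z) : HasDerivAt (besselK 0) (-besselK 1 z) z := by
  have hK0 : besselK 0 = fun z => ∫ t in Ioi (0 : ℝ), exp (-z * cosh t) := by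
    ext; simp [besselK]
  have hK1 : -besselK 1 z = ∫ t in Ioi (0 : ℝ), -(exp (-z * cosh t) * cosh t) := by
    simp [besselK, integral_neg]
  rw [hK0, hK1]
  refine (hasDerivAt_integral_of_dominated_loc_of_deriv_le
    (F := fun z t => exp (-z * cosh t)) (F' := fun z t => -(exp (-z * cosh t) * cosh t))
    (bound := fun t => exp (-(z / 2) * cosh t) * cosh t) (Ioi_mem_nhds (half_lt_self hz))
    (Eventually.of_forall fun x => by fun_prop)
    (by simpa [IntegrableOn] using integrableOn_exp_neg_mul_cosh hz) (by fun_prop)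
    (Eventually.of_forall fun t x hx => ?_)
    (by simpa [IntegrableOn] using integrableOn_exp_neg_mul_cosh_mul_cosh (half_pos hz) 1)
    (Eventually.of_forall fun t x _ => ?_)).2
  · have := cosh_pos t
    have := (mem_Ioi.1 hx).le
    rw [norm_neg, norm_of_nonneg (by positivity)]
    gcongr
  · exact ((hasDerivAt_neg x).mul_const (cosh t)).exp.congr_deriv (by ring)

lemma hasDerivAt_besselK_zero_add_log (hz : 0 < z) :
    HasDerivAt (fun z => besselK 0 z + log z) ((1 - z * besselK 1 z) / z) z :=
  ((hasDerivAt_besselK_zero hz).add (hasDerivAt_log hz.ne')).congr_deriv (by field_simp; ring)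

lemma monotoneOn_besselK_zero_add_log : MonotoneOn (fun z => besselK 0 z + log z) (Ioi 0) := by
  refine monotoneOn_of_hasDerivWithinAt_nonneg (f' := fun z => (1 - z * besselK 1 z) / z)
    (convex_Ioi 0)
    (fun x hx => (hasDerivAt_besselK_zero_add_log hx).continuousAt.continuousWithinAt) ?_ ?_
  all_goals
    rw [interior_Ioi]
    intro x hx
  · exact (hasDerivAt_besselK_zero_add_log hx).hasDerivWithinAt
  · exact div_nonneg (sub_nonneg.2 (mul_besselK_one_le_one hx)) (le_of_lt hx)

lemma besselK_zero_add_log_sub_le {a b : ℝ} (ha : 0 < a) (hab : a ≤ b) :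
    (besselK 0 b + log b) - (besselK 0 a + log a) ≤ (besselK 0 a + 1) * b ^ 2 := by
  have hK := besselK_nonneg 0 a
  have hderiv : ∀ x ∈ Icc a b,
      HasDerivAt (fun z => besselK 0 z + log z) ((1 - x * besselK 1 x) / x) x :=
    fun x hx => hasDerivAt_besselK_zero_add_log (ha.trans_le hx.1)
  have hbound : ∀ x ∈ Icc a b, (1 - x * besselK 1 x) / x ≤ (besselK 0 a + 1) * b := by
    intro x hx
    have hx0 : 0 < x := ha.trans_le hx.1
    rw [div_le_iff₀ hx0]
    calc 1 - x * besselK 1 x ≤ x ^ 2 * (besselK 0 x + 1) := one_sub_mul_besselK_one_le hx0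
      _ ≤ x ^ 2 * (besselK 0 a + 1) := by
          gcongr
          exact antitoneOn_besselK 0 ha hx0 hx.1
      _ = (besselK 0 a + 1) * x * x := by ring
      _ ≤ (besselK 0 a + 1) * b * x := by
          gcongr
          exact hx.2
  have hmvt := (convex_Icc a b).image_sub_le_mul_sub_of_deriv_le
    (fun x hx => (hderiv x hx).continuousAt.continuousWithinAt)
    (fun x hx => (hderiv x (interior_subset hx)).differentiableAt.differentiableWithinAt)
    (fun x hx => (hderiv x (interior_subset hx)).deriv.trans_le (hbound x (interior_subset hx)))
    a (left_mem_Icc.2 hab) b (right_mem_Icc.2 hab) hab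
  have hb : 0 < b := ha.trans_le hab
  have : 0 ≤ (besselK 0 a + 1) * b * a := by positivity
  linarith

end BesselK

/-- The tangential eigenvalue `λᵗ` of the Stokes slender-body PDE operator at wavenumber `k` about a
straight periodic cylinder of radius `ε`. -/
noncomputable def slenderBodyEigenvalue (ε k : ℝ) : ℝ :=
  4 * π ^ 2 * ε * k * besselK 1 (π * ε * k) ^ 2 /
    (2 * besselK 0 (π * ε * k) * besselK 1 (π * ε * k) +
      π * ε * k * (besselK 0 (π * ε * k) ^ 2 - besselK 1 (π * ε * k) ^ 2))

/-- The tangential eigenvalue `λ^{δ,t}` of the `δ`-regularized slender-body approximation. -/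
noncomputable def regularizedEigenvalue (δ ε k : ℝ) : ℝ :=
  4 * π / (-1 + 2 * log δ + 2 * besselK 0 (δ * π * ε * k))

/-- The symbol `s` of the slender-body PDE operator, normalized so that `λᵗ = 4π / s (πεk)`. -/
noncomputable def slenderBodySymbol (z : ℝ) : ℝ :=
  2 * besselK 0 z / (z * besselK 1 z) - 1 + (besselK 0 z / besselK 1 z) ^ 2

/-- The symbol `s` of the `δ`-regularized approximation, normalized so that
`λ^{δ,t} = 4π / s (πεk)`. -/
noncomputable def regularizedSymbol (δ z : ℝ) : ℝ :=
  -1 + 2 * log δ + 2 * besselK 0 (δ * z)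

lemma slenderBodyEigenvalue_eq_div_symbol {ε k : ℝ} (hz : 0 < π * ε * k) :
    slenderBodyEigenvalue ε k = 4 * π / slenderBodySymbol (π * ε * k) := by
  rw [slenderBodyEigenvalue, slenderBodySymbol,
    show 4 * π ^ 2 * ε * k = 4 * π * (π * ε * k) by ring]
  generalize π * ε * k = z at *
  have hK1 := besselK_one_pos hz
  have hsymbol : 2 * besselK 0 z * besselK 1 z + z * (besselK 0 z ^ 2 - besselK 1 z ^ 2) =
      z * besselK 1 z ^ 2 *
        (2 * besselK 0 z / (z * besselK 1 z) - 1 + (besselK 0 z / besselK 1 z) ^ 2) := by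
    field_simp
    ring
  rw [hsymbol, mul_assoc (4 * π), mul_comm (4 * π), mul_div_mul_left _ _ (by positivity)]

lemma regularizedEigenvalue_eq_div_symbol (δ ε k : ℝ) :
    regularizedEigenvalue δ ε k = 4 * π / regularizedSymbol δ (π * ε * k) := by
  simp only [regularizedEigenvalue, regularizedSymbol, mul_assoc]

lemma regularizedSymbol_mem_Icc {δ z : ℝ} (hδ : 1 ≤ δ) (hz : 0 < z) :
    regularizedSymbol δ z ∈ Icc (2 * besselK 0 z - 1)
      (2 * besselK 0 z - 1 + 2 * (besselK 0 z + 1) * (δ * z) ^ 2) := by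
  have hzδ : z ≤ δ * z := le_mul_of_one_le_left hz.le hδ
  have hlog : log (δ * z) = log δ + log z := log_mul (by positivity) hz.ne'
  have hlower : besselK 0 z + log z ≤ besselK 0 (δ * z) + log (δ * z) :=
    monotoneOn_besselK_zero_add_log hz (hz.trans_le hzδ) hzδ
  have hupper := besselK_zero_add_log_sub_le hz hzδ
  rw [hlog] at hlower hupper
  constructor <;> rw [regularizedSymbol] <;> linarith

lemma slenderBodySymbol_mem_Icc {z : ℝ} (hz : 0 < z) (hz4 : z ≤ 1 / 4) :
    slenderBodySymbol z ∈ Icc (2 * besselK 0 z - 1)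
      (2 * besselK 0 z - 1 + 5 * besselK 0 z * (besselK 0 z + 1) * z ^ 2) := by
  have hK0 := besselK_nonneg 0 z
  have hle := mul_besselK_one_le_one hz
  have hge : 3 / 4 ≤ z * besselK 1 z :=
    calc 3 / 4 ≤ 1 - z := by linarith
      _ ≤ exp (-z) := one_sub_le_exp_neg z
      _ ≤ z * besselK 1 z := exp_neg_le_mul_besselK_one hz
  have hgap := one_sub_mul_besselK_one_le hz
  have hratio : besselK 0 z / besselK 1 z = z * besselK 0 z / (z * besselK 1 z) :=
    (mul_div_mul_left _ _ hz.ne').symm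
  rw [slenderBodySymbol, hratio]
  generalize besselK 0 z = K at *
  generalize z * besselK 1 z = x at *
  have hx : 0 < x := by linarith
  constructor
  · have : 2 * K ≤ 2 * K / x := le_div_self (by positivity) hx hle
    linarith [sq_nonneg (z * K / x)]
  · have hlinear : 2 * K / x - 2 * K ≤ z ^ 2 * (8 / 3 * K * (K + 1)) :=
      calc 2 * K / x - 2 * K = 2 * K * (1 - x) / x := by field_simp
        _ ≤ 2 * K * (z ^ 2 * (K + 1)) / (3 / 4) := by gcongr
        _ = z ^ 2 * (8 / 3 * K * (K + 1)) := by ring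
    have hsquare : (z * K / x) ^ 2 ≤ z ^ 2 * (16 / 9 * K ^ 2) :=
      calc (z * K / x) ^ 2 ≤ (z * K / (3 / 4)) ^ 2 := by gcongr
        _ = z ^ 2 * (16 / 9 * K ^ 2) := by ring
    have : 0 ≤ z ^ 2 * K := by positivity
    have : 0 ≤ z ^ 2 * K ^ 2 := by positivity
    linarith

lemma abs_inv_slenderBodySymbol_sub_inv_regularizedSymbol_le {δ z : ℝ} (hδ : 1 ≤ δ) (hz : 0 < z)
    (hz4 : z ≤ 1 / 4) :
    |(slenderBodySymbol z)⁻¹ - (regularizedSymbol δ z)⁻¹| ≤ 14 * (δ * z) ^ 2 := by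
  have hK := nine_tenths_le_besselK_zero hz hz4
  have hpde := slenderBodySymbol_mem_Icc hz hz4
  have hreg := regularizedSymbol_mem_Icc hδ hz
  generalize besselK 0 z = K at *
  have hd : 0 < 2 * K - 1 := by linarith
  have hzδ : z ≤ δ * z := le_mul_of_one_le_left hz.le hδ
  have hpde_gap : 5 * K * (K + 1) * z ^ 2 ≤ 14 * (2 * K - 1) ^ 2 * (δ * z) ^ 2 :=
    mul_le_mul (by nlinarith) (by gcongr) (by positivity) (by positivity)
  have hreg_gap : 2 * (K + 1) * (δ * z) ^ 2 ≤ 14 * (2 * K - 1) ^ 2 * (δ * z) ^ 2 :=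
    mul_le_mul_of_nonneg_right (by nlinarith) (by positivity)
  calc |(slenderBodySymbol z)⁻¹ - (regularizedSymbol δ z)⁻¹|
      ≤ 14 * (2 * K - 1) ^ 2 * (δ * z) ^ 2 / (2 * K - 1) ^ 2 :=
        abs_inv_sub_inv_le hd (Icc_subset_Icc_right (by linarith) hpde)
          (Icc_subset_Icc_right (by linarith) hreg)
    _ = 14 * (δ * z) ^ 2 := by field_simp

theorem delta_reg_stokes_tangential_eigenvalue_difference_refined_general {δ ε k : ℝ}
    (hδ : 1 ≤ δ) (hε : 0 < ε) (hk : 0 < k) (hz : π * ε * k ≤ 1 / 4) :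
    |slenderBodyEigenvalue ε k - regularizedEigenvalue δ ε k| ≤
      56 * π ^ 3 * δ ^ 2 * ε ^ 2 * k ^ 2 := by
  have hz0 : 0 < π * ε * k := by positivity
  rw [slenderBodyEigenvalue_eq_div_symbol hz0, regularizedEigenvalue_eq_div_symbol,
    div_eq_mul_inv, div_eq_mul_inv, ← mul_sub, abs_mul, abs_of_pos (by positivity : 0 < 4 * π)]
  calc 4 * π * |(slenderBodySymbol (π * ε * k))⁻¹ - (regularizedSymbol δ (π * ε * k))⁻¹|
      ≤ 4 * π * (14 * (δ * (π * ε * k)) ^ 2) := by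
        gcongr
        exact abs_inv_slenderBodySymbol_sub_inv_regularizedSymbol_le hδ hz0 hz
    _ = 56 * π ^ 3 * δ ^ 2 * ε ^ 2 * k ^ 2 := by ring

theorem delta_reg_stokes_tangential_eigenvalue_difference_refined :
    ∃ C : ℝ, 0 < C ∧ ∀ δ : ℝ, Real.sqrt (Real.exp 1) < δ → ∀ ε : ℝ, 0 < ε →
      ∀ k : ℕ, 1 ≤ k → π * ε * (k : ℝ) ≤ 1 / 4 →
      |4 * π ^ 2 * ε * (k : ℝ) * (besselK 1 (π * ε * (k : ℝ))) ^ 2 /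
            (2 * besselK 0 (π * ε * (k : ℝ)) * besselK 1 (π * ε * (k : ℝ)) +
              π * ε * (k : ℝ) *
                ((besselK 0 (π * ε * (k : ℝ))) ^ 2 - (besselK 1 (π * ε * (k : ℝ))) ^ 2)) -
          4 * π / (-1 + 2 * Real.log δ + 2 * besselK 0 (δ * π * ε * (k : ℝ)))| ≤
        C * δ ^ 2 * (1 + Real.log δ) * ε ^ 2 * (k : ℝ) ^ 2 := by
  refine ⟨56 * π ^ 3, by positivity, fun δ hδ ε hε k hk hz => ?_⟩
  have hδ1 : 1 ≤ δ := (one_le_sqrt.2 (one_le_exp zero_le_one)).trans hδ.le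
  refine (delta_reg_stokes_tangential_eigenvalue_difference_refined_general hδ1 hε
    (Nat.cast_pos.2 hk) hz).trans ?_
  gcongr ?_ * ε ^ 2 * (k : ℝ) ^ 2
  exact le_mul_of_one_le_right (by positivity) (le_add_of_nonneg_right (log_nonneg hδ1))
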